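/- Let A ∈ M_n(ℤ) be non-singular with h_A irreducible over ℚ and P'(A) ≠ ∅, and assume there exists a prime p with gcd(n, t_p) = 1. Let K be a number field with ring of integers O_K, λ ∈ O_K a root of h_A with K = ℚ(λ), and let u ∈ K^n be a nonzero vector with (A over K)·u = λ·u. Then for every T ∈ M_n(ℚ) with T·x ∈ G_A for all x ∈ G_A, there exists x ∈ K with λ^k·x ∈ O_K for some k ∈ ℕ such that (T over K)·u = x·u. -/

import Mathlib

open Matrix Polynomial

noncomputable section

/-- The matrix `A` viewed over `ℚ`. -/
def Aq {n : ℕ} (A : Matrix (Fin n) (Fin n) ℤ) : Matrix (Fin n) (Fin n) ℚ :=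
  A.map (Int.cast : ℤ → ℚ)

/-- The group `G_A = {A^k x : x ∈ ℤ^n, k ∈ ℤ} ⊆ ℚ^n`. -/
def GA {n : ℕ} (A : Matrix (Fin n) (Fin n) ℤ) : Set (Fin n → ℚ) :=
  {v | ∃ (k : ℤ) (x : Fin n → ℤ), v = (Aq A ^ k) *ᵥ fun i => ((x i : ℚ))}

/-- `P'(A)`: primes dividing `det A` such that `h_A ≢ x^n (mod p)`. -/
def Pbad {n : ℕ} (A : Matrix (Fin n) (Fin n) ℤ) : Set ℕ :=
  {p | p.Prime ∧ (p : ℤ) ∣ A.det ∧ A.charpoly.map (Int.castRingHom (ZMod p)) ≠ X ^ n}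

/-- `t_p`: multiplicity of `0` as a root of `h_A` mod `p`. -/
def tp {n : ℕ} (A : Matrix (Fin n) (Fin n) ℤ) (p : ℕ) : ℕ :=
  Polynomial.rootMultiplicity 0 (A.charpoly.map (Int.castRingHom (ZMod p)))

/-!
Let `v` be a valuation of the algebraic numbers above `p`, and decompose `1 = ∑ π_α` over the roots
`α` of `h_A`, where `π_α` is the projection onto the `α`-eigenspace of `A`. For `T` preserving
`G_A` and every `m` there is a `k` such that `A ^ k * T * A ^ (-m)` is integral, so the entries of
`α ^ k • π_α * T * π_β` are bounded multiples of `β ^ m`. If `v β < 1` and `v α = 1`, letting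
`m → ∞` gives `π_α * T * π_β = 0`.

As `A` and `T` are rational, the vanishing is invariant under the Galois group, so a nonzero block
`π_α * T * π_β` forces `v (σ α) < 1` whenever `v (σ β) < 1`. Such an inclusion is an equality, and
having the same set of `σ` is a Galois-invariant equivalence relation on the roots. All its classes
have the same size, which divides both the number `n` of roots and the number `t_p` of roots with
`v α < 1`. Hence `α = β`, so `T` is block diagonal and commutes with `A`.
-/

section TransitiveAction

open scoped Pointwise

variable {G E : Type*} [Group G] [MulAction G E]

variable (G) in
/-- The elements of `G` carrying `x` into `S`. For a Galois group acting on the roots of a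
polynomial and `S` the set of roots `α` with `v α < 1`, it records which conjugates of the root `x`
lie in the maximal ideal of `v`. -/
def hittingSet (S : Set E) (x : E) : Set G :=
  {g | g • x ∈ S}

theorem hittingSet_smul (S : Set E) (g : G) (x : E) :
    hittingSet G S (g • x) = (· * g) ⁻¹' hittingSet G S x := by
  ext h
  exact iff_of_eq (congrArg (· ∈ S) (mul_smul h g x).symm)

theorem hittingSet_smul_inj {S : Set E} (g : G) {x y : E} :
    hittingSet G S (g • x) = hittingSet G S (g • y) ↔ hittingSet G S x = hittingSet G S y := by
  rw [hittingSet_smul, hittingSet_smul]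
  exact (Group.mulRight_bijective g).surjective.preimage_injective.eq_iff

theorem hittingSet_eq_of_subset [Finite E] [MulAction.IsPretransitive G E] {S : Set E} {x y : E}
    (h : hittingSet G S x ⊆ hittingSet G S y) : hittingSet G S x = hittingSet G S y := by
  obtain ⟨g, rfl⟩ := MulAction.exists_smul_eq G x y
  have hmono : Monotone fun k : ℕ => hittingSet G S (g ^ k • x) := by
    refine monotone_nat_of_le_succ fun k => ?_
    rw [pow_succ, mul_smul, hittingSet_smul S (g ^ k), hittingSet_smul S (g ^ k)]
    exact Set.preimage_mono h
  obtain ⟨m, hm, hgm⟩ := (isOfFinOrder_of_finite (MulAction.toPermHom G E g)).exists_pow_eq_one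
  have hfix : g ^ m • x = x := by
    rw [← map_pow] at hgm
    exact DFunLike.congr_fun hgm x
  have hle := hmono (Nat.one_le_iff_ne_zero.2 hm.ne')
  simp only [pow_one, hfix] at hle
  exact h.antisymm hle

theorem ncard_hittingSet_fiber_eq [MulAction.IsPretransitive G E] (S : Set E) (x y : E) :
    {z | hittingSet G S z = hittingSet G S x}.ncard =
      {z | hittingSet G S z = hittingSet G S y}.ncard := by
  obtain ⟨g, rfl⟩ := MulAction.exists_smul_eq G y x
  have hfiber : {z | hittingSet G S z = hittingSet G S (g • y)} =
      g • {z | hittingSet G S z = hittingSet G S y} := by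
    ext z
    rw [Set.mem_smul_set_iff_inv_smul_mem, Set.mem_ofPred_eq, Set.mem_ofPred_eq,
      ← hittingSet_smul_inj g (x := g⁻¹ • z), smul_inv_smul]
  rw [hfiber, Set.ncard_smul_set]

theorem ncard_hittingSet_fiber_dvd_ncard [Finite E] [MulAction.IsPretransitive G E]
    (S : Set E) {U : Set E}
    (hU : ∀ y ∈ U, {z | hittingSet G S z = hittingSet G S y} ⊆ U) (x : E) :
    {z | hittingSet G S z = hittingSet G S x}.ncard ∣ U.ncard := by
  classical
  have := Fintype.ofFinite E
  rw [Set.ncard_eq_toFinset_card' U, Finset.card_eq_sum_card_image (hittingSet G S)]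
  refine Finset.dvd_sum ?_
  simp only [Finset.forall_mem_image, Set.mem_toFinset]
  intro y hy
  rw [ncard_hittingSet_fiber_eq S x y, Set.ncard_eq_toFinset_card']
  refine dvd_of_eq (congrArg Finset.card ?_)
  ext z
  simpa using @hU y hy z

theorem eq_of_hittingSet_subset [Finite E] [MulAction.IsPretransitive G E] {S : Set E}
    (hS : (Nat.card E).Coprime S.ncard) {x y : E}
    (h : hittingSet G S x ⊆ hittingSet G S y) : x = y := by
  set F := {z | hittingSet G S z = hittingSet G S y}
  have hE : F.ncard ∣ Nat.card E := by
    rw [← Set.ncard_univ]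
    exact ncard_hittingSet_fiber_dvd_ncard S (fun _ _ => Set.subset_univ _) y
  have hSF : F.ncard ∣ S.ncard := by
    refine ncard_hittingSet_fiber_dvd_ncard S (fun z hz w hw => ?_) y
    have hone : (1 : G) ∈ hittingSet G S z := by simpa [hittingSet] using hz
    rw [← hw] at hone
    simpa [hittingSet] using hone
  have hF : F.ncard ≤ 1 := (Nat.eq_one_of_dvd_coprimes hS hE hSF).le
  exact (Set.ncard_le_one_iff (Set.toFinite F)).1 hF (hittingSet_eq_of_subset h) rfl

end TransitiveAction

section Valuation

open scoped NNReal

theorem exists_valuation_natCast_prime_lt_one (L : Type*) [Field L] [Algebra ℚ L]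
    [Algebra.IsAlgebraic ℚ L] (p : ℕ) [Fact p.Prime] :
    ∃ v : Valuation L ℝ≥0, v p < 1 := by
  let ι : L →ₐ[ℚ] PadicAlgCl p := IsAlgClosed.lift
  refine ⟨(Valued.v : Valuation (PadicAlgCl p) ℝ≥0).comap ι.toRingHom, ?_⟩
  have hp : (1 : ℝ≥0) < p := mod_cast (Fact.out : p.Prime).one_lt
  rw [Valuation.comap_apply, map_natCast, PadicAlgCl.valuation_p, one_div]
  exact inv_lt_one_of_one_lt₀ hp

variable {L Γ₀ : Type*} [Field L] [LinearOrderedCommGroupWithZero Γ₀] (v : Valuation L Γ₀)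

theorem splits_map_valuationSubring {f : ℤ[X]} (hf : f.Monic)
    (hsplit : (f.map (Int.castRingHom L)).Splits) :
    (f.map (Int.castRingHom v.valuationSubring)).Splits := by
  have hmap : (f.map (Int.castRingHom v.valuationSubring)).map v.valuationSubring.subtype =
      f.map (Int.castRingHom L) := by
    rw [Polynomial.map_map]
    exact congrArg f.map (RingHom.ext_int _ _)
  refine Splits.of_splits_map_of_injective (i := v.valuationSubring.subtype)
    Subtype.val_injective (hmap ▸ hsplit) fun a ha => ?_
  rw [hmap, mem_roots', IsRoot, eval_map] at ha
  have hint : IsIntegral ℤ a := ⟨f, hf, ha.2⟩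
  exact ⟨⟨a, (Valuation.integer.integers v).mem_of_integral hint.tower_top⟩, rfl⟩

theorem rootMultiplicity_zero_map_zmod {p : ℕ} [Fact p.Prime] (hp : v p < 1) {f : ℤ[X]}
    (hf : f.Monic) (hsplit : (f.map (Int.castRingHom L)).Splits) :
    (f.map (Int.castRingHom (ZMod p))).rootMultiplicity 0 =
      (f.map (Int.castRingHom L)).roots.countP (v · < 1) := by
  classical
  let k := IsLocalRing.ResidueField v.valuationSubring
  have hpk : (p : k) = 0 := by
    rw [← map_natCast (IsLocalRing.residue v.valuationSubring), IsLocalRing.residue_eq_zero_iff,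
      Valuation.mem_maximalIdeal_iff]
    exact hp
  have : CharP k p := (CharP.charP_iff_prime_eq_zero Fact.out).2 hpk
  let φ : ZMod p →+* k := ZMod.castHom dvd_rfl k
  let g := f.map (Int.castRingHom v.valuationSubring)
  have hg : g.Splits := splits_map_valuationSubring v hf hsplit
  have hk : (f.map (Int.castRingHom (ZMod p))).map φ = g.map (IsLocalRing.residue _) := by
    rw [Polynomial.map_map, Polynomial.map_map]
    exact congrArg f.map (RingHom.ext_int _ _)
  have hL : f.map (Int.castRingHom L) = g.map v.valuationSubring.subtype := by
    rw [Polynomial.map_map]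
    exact congrArg f.map (RingHom.ext_int _ _)
  rw [eq_rootMultiplicity_map φ.injective, map_zero, hk, hL,
    hg.roots_map_of_injective Subtype.val_injective, ← count_roots,
    hg.roots_map_of_ne_zero ((hf.map _).map _).ne_zero, Multiset.count_map, Multiset.countP_map]
  refine congrArg Multiset.card (Multiset.filter_congr fun a _ => ?_)
  rw [eq_comm, IsLocalRing.residue_eq_zero_iff, Valuation.mem_maximalIdeal_iff]
  rfl

variable {n : Type*} [Fintype n]

theorem exists_forall_valuation_mul_map_intCast_mul_le (X Y : Matrix n n L) (i j : n) :
    ∃ c, ∀ M : Matrix n n ℤ, v ((X * M.map (Int.cast : ℤ → L) * Y) i j) ≤ c := by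
  obtain ⟨c, hc⟩ := (Set.finite_range fun kl : n × n => v (X i kl.1) * v (Y kl.2 j)).bddAbove
  refine ⟨c, fun M => ?_⟩
  simp only [Matrix.mul_apply, Finset.sum_mul, Matrix.map_apply]
  refine v.map_sum_le fun l _ => v.map_sum_le fun k _ => ?_
  have hM : v (M k l) ≤ 1 := intCast_mem v.integer (M k l)
  calc v (X i k * M k l * Y l j) = v (M k l) * (v (X i k) * v (Y l j)) := by
        rw [map_mul, map_mul]; ac_rfl
    _ ≤ v (X i k) * v (Y l j) := mul_le_of_le_one_left' hM
    _ ≤ c := hc (Set.mem_range_self (k, l))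

theorem eq_zero_of_forall_le_mul_pow [MulArchimedean Γ₀] {b c x : Γ₀} (hb : b < 1)
    (h : ∀ m : ℕ, x ≤ c * b ^ m) : x = 0 := by
  by_contra hx
  have hc : c ≠ 0 := by
    rintro rfl
    exact hx (by simpa using h 0)
  obtain ⟨m, hm⟩ := exists_pow_lt₀ hb (Units.mk0 (c⁻¹ * x) (mul_ne_zero (inv_ne_zero hc) hx))
  refine (h m).not_gt ?_
  calc c * b ^ m < c * (c⁻¹ * x) := mul_lt_mul_of_pos_left hm (zero_lt_iff.2 hc)
    _ = x := mul_inv_cancel_left₀ hc x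

theorem mul_pow_eq_pow_smul {F R : Type*} [CommSemiring F] [Semiring R] [Algebra F R] {x b : R}
    {r : F} (h : x * b = r • x) (k : ℕ) : x * b ^ k = r ^ k • x := by
  induction k with
  | zero => simp
  | succ k ih => rw [pow_succ, ← mul_assoc, ih, smul_mul_assoc, h, smul_smul, pow_succ]

theorem pow_mul_eq_pow_smul {F R : Type*} [CommSemiring F] [Semiring R] [Algebra F R] {x b : R}
    {r : F} (h : b * x = r • x) (k : ℕ) : b ^ k * x = r ^ k • x := by
  induction k with
  | zero => simp
  | succ k ih => rw [pow_succ', mul_assoc, ih, mul_smul_comm, h, smul_smul, pow_succ]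

theorem mul_mul_eq_zero_of_valuation_lt_one [DecidableEq n] [MulArchimedean Γ₀]
    {B C X Y : Matrix n n L} {a b : L}
    (hC : ∀ m : ℕ, ∃ k : ℕ, ∃ M : Matrix n n ℤ, B ^ k * C = M.map (Int.cast : ℤ → L) * B ^ m)
    (hX : X * B = a • X) (hY : B * Y = b • Y) (ha : 1 ≤ v a) (hb : v b < 1) : X * C * Y = 0 := by
  ext i j
  obtain ⟨c, hc⟩ := exists_forall_valuation_mul_map_intCast_mul_le v X Y i j
  refine v.zero_iff.1 (eq_zero_of_forall_le_mul_pow (c := c) hb fun m => ?_)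
  obtain ⟨k, M, hM⟩ := hC m
  have hkm : a ^ k • (X * C * Y) = b ^ m • (X * M.map (Int.cast : ℤ → L) * Y) :=
    calc a ^ k • (X * C * Y) = X * (B ^ k * C) * Y := by
          rw [← mul_assoc, mul_pow_eq_pow_smul hX, smul_mul_assoc, smul_mul_assoc]
      _ = X * M.map (Int.cast : ℤ → L) * (B ^ m * Y) := by rw [hM]; simp only [mul_assoc]
      _ = b ^ m • (X * M.map (Int.cast : ℤ → L) * Y) := by
          rw [pow_mul_eq_pow_smul hY, mul_smul_comm]
  calc v ((X * C * Y) i j) ≤ v a ^ k * v ((X * C * Y) i j) :=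
        le_mul_of_one_le_left' (one_le_pow_of_one_le' ha k)
    _ = v ((X * M.map (Int.cast : ℤ → L) * Y) i j) * v b ^ m := by
        have hij := congrArg v (congrFun₂ hkm i j)
        rwa [Matrix.smul_apply, Matrix.smul_apply, smul_eq_mul, smul_eq_mul, map_mul, map_mul,
          map_pow, map_pow, mul_comm (v b ^ m)] at hij
    _ ≤ c * v b ^ m := mul_le_mul_left (hc M) _

end Valuation

section Lagrange

variable {F R ι : Type*} [Field F] [Ring R] [Algebra F R] [Fintype ι] [DecidableEq ι]

/-- The projection onto the `v i`-eigenspace of `a`, for `a` annihilated by `∏ j, (X - C (v j))`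
with distinct `v j`: the `i`-th Lagrange basis polynomial of the nodes `v` evaluated at `a`. -/
def spectralProj (v : ι → F) (a : R) (i : ι) : R :=
  aeval a (Lagrange.basis Finset.univ v i)

theorem sum_spectralProj [Nonempty ι] {v : ι → F} (hv : Function.Injective v) (a : R) :
    ∑ i, spectralProj v a i = 1 := by
  simp only [spectralProj]
  rw [← map_sum, Lagrange.sum_basis hv.injOn Finset.univ_nonempty, map_one]

theorem mul_spectralProj {v : ι → F} {a : R} (ha : aeval a (Lagrange.nodal Finset.univ v) = 0)
    (i : ι) : a * spectralProj v a i = v i • spectralProj v a i := by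
  have hdvd : Lagrange.nodal Finset.univ v ∣ (X - C (v i)) * Lagrange.basis Finset.univ v i := by
    rw [Lagrange.basis_eq_prod_sub_inv_mul_nodal_div (Finset.mem_univ i), mul_left_comm,
      ← Lagrange.nodal_erase_eq_nodal_div (Finset.mem_univ i),
      ← Lagrange.nodal_eq_mul_nodal_erase (Finset.mem_univ i)]
    exact dvd_mul_left _ _
  have hzero := aeval_eq_zero_of_dvd_aeval_eq_zero hdvd ha
  rw [map_mul, map_sub, aeval_X, aeval_C, sub_mul, sub_eq_zero, ← Algebra.smul_def] at hzero
  exact hzero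

theorem spectralProj_mul {v : ι → F} {a : R} (ha : aeval a (Lagrange.nodal Finset.univ v) = 0)
    (i : ι) : spectralProj v a i * a = v i • spectralProj v a i := by
  rw [← mul_spectralProj ha]
  simpa only [aeval_X, spectralProj] using ((Commute.all _ X).map (aeval (R := F) a)).eq

theorem map_spectralProj {F' R' : Type*} [Field F'] [Ring R'] [Algebra F' R'] {φ : F →+* F'}
    {ψ : R →+* R'} (h : (algebraMap F' R').comp φ = ψ.comp (algebraMap F R)) (v : ι → F) (a : R)
    (i : ι) :
    ψ (spectralProj v a i) = spectralProj (φ ∘ v) (ψ a) i := by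
  simp [spectralProj, map_aeval_eq_aeval_map h, Lagrange.basis, Lagrange.basisDivisor,
    Polynomial.map_prod]

theorem spectralProj_comp_equiv (e : ι ≃ ι) (v : ι → F) (a : R) (i : ι) :
    spectralProj (v ∘ e) a i = spectralProj v a (e i) := by
  exact congrArg (aeval a) (Finset.prod_equiv e (by simp) (by simp))

theorem commute_of_forall_spectralProj_mul_mul_eq_zero [Nonempty ι] {v : ι → F}
    (hv : Function.Injective v) {a t : R} (ha : aeval a (Lagrange.nodal Finset.univ v) = 0)
    (h : ∀ i j, i ≠ j → spectralProj v a i * t * spectralProj v a j = 0) : Commute a t := by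
  have ht : t = ∑ i, spectralProj v a i * t * spectralProj v a i := by
    calc t = (∑ i, spectralProj v a i) * t * ∑ j, spectralProj v a j := by
          rw [sum_spectralProj hv, one_mul, mul_one]
      _ = ∑ i, ∑ j, spectralProj v a i * t * spectralProj v a j := by
          simp only [Finset.sum_mul, Finset.mul_sum]
          exact Finset.sum_comm
      _ = ∑ i, spectralProj v a i * t * spectralProj v a i :=
          Finset.sum_congr rfl fun i _ => Fintype.sum_eq_single i fun j hj => h i j hj.symm
  rw [ht]
  refine Commute.sum_right _ _ _ fun i _ => ?_
  rw [commute_iff_eq, ← mul_assoc, ← mul_assoc, mul_spectralProj ha, mul_assoc _ _ a,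
    spectralProj_mul ha, mul_smul_comm, smul_mul_assoc, smul_mul_assoc]

end Lagrange

section Galois

variable {F L : Type*} [Field F] [Field L] [Algebra F L]

theorem isPretransitive_rootSet [Normal F L] {f : F[X]} (hf : Irreducible f) :
    MulAction.IsPretransitive Gal(L/F) (f.rootSet L) where
  exists_smul_eq x y := by
    have hminpoly : minpoly F (y : L) = minpoly F (x : L) :=
      (minpoly.eq_of_irreducible hf (aeval_eq_zero_of_mem_rootSet y.2)).symm.trans
        (minpoly.eq_of_irreducible hf (aeval_eq_zero_of_mem_rootSet x.2))
    obtain ⟨σ, hσ⟩ := (Normal.minpoly_eq_iff_mem_orbit L).1 hminpoly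
    exact ⟨σ, Subtype.ext hσ⟩

variable {f : F[X]}

theorem ncard_setOf_rootSet_eq_countP (hf : f.Separable) (q : L → Prop) [DecidablePred q] :
    {α : f.rootSet L | q α}.ncard = (f.aroots L).countP q := by
  classical
  have himage : Subtype.val '' {α : f.rootSet L | q α} =
      ((f.aroots L).toFinset.filter q : Finset L) := by
    ext a
    simp [rootSet_def, and_comm]
  rw [← Set.ncard_image_of_injective _ Subtype.val_injective, himage, Set.ncard_coe_finset,
    Multiset.countP_eq_card_filter, Finset.card_def, Finset.filter_val,
    Multiset.toFinset_val, (nodup_roots hf.map).dedup]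

theorem nodal_rootSet (hf : f.Monic) (hsep : f.Separable)
    (hsplit : (f.map (algebraMap F L)).Splits) :
    Lagrange.nodal Finset.univ (Subtype.val : f.rootSet L → L) = f.map (algebraMap F L) := by
  classical
  have hroots :
      (Finset.univ : Finset (f.rootSet L)).image Subtype.val = (f.aroots L).toFinset := by
    ext a
    simp [rootSet_def]
  calc Lagrange.nodal Finset.univ (Subtype.val : f.rootSet L → L)
      = ∏ a ∈ (f.aroots L).toFinset, (X - C a) := by
        rw [Lagrange.nodal_eq, ← hroots, Finset.prod_image Subtype.val_injective.injOn]
    _ = ((f.aroots L).map (X - C ·)).prod := by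
        rw [Finset.prod_eq_multiset_prod, Multiset.toFinset_val, (nodup_roots hsep.map).dedup]
    _ = f.map (algebraMap F L) := (hsplit.eq_prod_roots_of_monic (hf.map _)).symm

theorem mapMatrix_spectralProj [DecidableEq L] {n : Type*} [Fintype n] [DecidableEq n]
    (M : Matrix n n F) (σ : Gal(L/F)) (α : f.rootSet L) :
    σ.mapMatrix (spectralProj Subtype.val (M.map (algebraMap F L)) α) =
      spectralProj Subtype.val (M.map (algebraMap F L)) (σ • α) := by
  have hM : σ.mapMatrix (M.map (algebraMap F L)) = M.map (algebraMap F L) := by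
    ext i j
    exact σ.commutes (M i j)
  have hval : (Subtype.val ∘ MulAction.toPerm σ : f.rootSet L → L) = σ ∘ Subtype.val := rfl
  rw [← MulAction.toPerm_apply σ α, ← spectralProj_comp_equiv, hval]
  have hscalar : (algebraMap L (Matrix n n L)).comp (σ : L →+* L) =
      (σ : L →+* L).mapMatrix.comp (algebraMap L (Matrix n n L)) := by
    ext a i j
    by_cases hij : i = j <;> simp [algebraMap_matrix_apply, hij]
  exact (map_spectralProj hscalar Subtype.val (M.map (algebraMap F L)) α).trans
    (congrArg (spectralProj _ · α) hM)

theorem aeval_nodal_rootSet_charpoly {n : Type*} [Fintype n] [DecidableEq n] {M : Matrix n n F}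
    (hsep : M.charpoly.Separable) (hsplit : (M.charpoly.map (algebraMap F L)).Splits) :
    aeval (M.map (algebraMap F L))
      (Lagrange.nodal Finset.univ (Subtype.val : M.charpoly.rootSet L → L)) = 0 := by
  rw [nodal_rootSet M.charpoly_monic hsep hsplit, ← charpoly_map]
  exact aeval_self_charpoly _

end Galois

section IntegerMatrices

variable {n : Type*}

theorem map_intCast_map_algebraMap {K : Type*} [Field K] [Algebra ℚ K] (M : Matrix n n ℤ) :
    (M.map (Int.cast : ℤ → ℚ)).map (algebraMap ℚ K) = M.map (Int.cast : ℤ → K) := by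
  ext i j
  exact map_intCast (algebraMap ℚ K) (M i j)

theorem charpoly_map_intCast {R : Type*} [Fintype n] [DecidableEq n] [CommRing R]
    (M : Matrix n n ℤ) :
    (M.map (Int.cast : ℤ → R)).charpoly = M.charpoly.map (Int.castRingHom R) :=
  charpoly_map M (Int.castRingHom R)

end IntegerMatrices

section IntegralVectors

variable {n : ℕ} {A : Matrix (Fin n) (Fin n) ℤ}

theorem isUnit_det_Aq (hA : A.det ≠ 0) : IsUnit (Aq A).det := by
  have hdet : (Aq A).det = A.det := (RingHom.map_det (Int.castRingHom ℚ) A).symm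
  rw [hdet]
  exact isUnit_iff_ne_zero.2 (Int.cast_ne_zero.2 hA)

theorem eventually_pow_mulVec_eq_intCast (hA : A.det ≠ 0) {v : Fin n → ℚ} (hv : v ∈ GA A) :
    ∀ᶠ k : ℕ in Filter.atTop, ∃ x : Fin n → ℤ, Aq A ^ k *ᵥ v = Int.cast ∘ x := by
  obtain ⟨l, y, rfl⟩ := hv
  filter_upwards [Filter.eventually_ge_atTop l.natAbs] with k hk
  obtain ⟨m, hm⟩ := Int.eq_ofNat_of_zero_le (show 0 ≤ (k : ℤ) + l by omega)
  refine ⟨A ^ m *ᵥ y, ?_⟩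
  have hpow : Aq A ^ m = (A ^ m).map (Int.castRingHom ℚ) :=
    (map_pow (Int.castRingHom ℚ).mapMatrix A m).symm
  rw [mulVec_mulVec, ← zpow_natCast, ← zpow_add (isUnit_det_Aq hA), hm, zpow_natCast, hpow]
  ext i
  exact (RingHom.map_mulVec (Int.castRingHom ℚ) _ _ _).symm

theorem exists_pow_mul_eq_map_intCast_mul_pow (hA : A.det ≠ 0) {T : Matrix (Fin n) (Fin n) ℚ}
    (hT : ∀ v ∈ GA A, T *ᵥ v ∈ GA A) (m : ℕ) :
    ∃ (k : ℕ) (M : Matrix (Fin n) (Fin n) ℤ),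
      Aq A ^ k * T = M.map (Int.cast : ℤ → ℚ) * Aq A ^ m := by
  have hcol (j : Fin n) : T *ᵥ (Aq A ^ (-m : ℤ) *ᵥ Pi.single j 1) ∈ GA A := by
    refine hT _ ⟨-m, Pi.single j 1, congrArg _ (funext fun i => ?_)⟩
    simp [Pi.single_apply]
  obtain ⟨k, hk⟩ := (Filter.eventually_all.2 fun j =>
    eventually_pow_mulVec_eq_intCast hA (hcol j)).exists
  choose x hx using hk
  have hM : Aq A ^ k * T * Aq A ^ (-m : ℤ) = (Matrix.of x)ᵀ.map (Int.cast : ℤ → ℚ) := by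
    refine Matrix.ext_of_mulVec_single fun j => ?_
    rw [← mulVec_mulVec, ← mulVec_mulVec, hx]
    ext i
    simp
  refine ⟨k, (Matrix.of x)ᵀ, ?_⟩
  rw [← hM, mul_assoc, ← zpow_natCast (Aq A) m, ← zpow_add (isUnit_det_Aq hA)]
  simp

end IntegralVectors

section Eigenvector

variable {K : Type*} [Field K]

theorem exists_apply_eq_smul_of_commute {V : Type*} [AddCommGroup V] [Module K V]
    [FiniteDimensional K V] {f g : Module.End K V} (hf : f.charpoly.Separable)
    (hfg : Commute f g) {μ : K} {u : V} (hu : f.HasEigenvector μ u) : ∃ x : K, g u = x • u := by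
  have hgu : g u ∈ f.eigenspace μ := by
    rw [Module.End.mem_eigenspace_iff, ← Module.End.mul_apply, hfg.eq, Module.End.mul_apply,
      hu.apply_eq_smul, map_smul]
  have hdim : Module.finrank K (f.eigenspace μ) ≤ 1 :=
    (f.finrank_eigenspace_le μ).trans (rootMultiplicity_le_one_of_separable hf μ)
  let w : f.eigenspace μ := ⟨u, hu.1⟩
  have hw : w ≠ 0 := Subtype.coe_ne_coe.1 hu.2
  have hdim_eq := hdim.antisymm (Module.finrank_pos_iff_exists_ne_zero.2 ⟨w, hw⟩)
  obtain ⟨x, hx⟩ := (finrank_eq_one_iff_of_nonzero' w hw).1 hdim_eq ⟨g u, hgu⟩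
  exact ⟨x, congrArg Subtype.val hx.symm⟩

variable {n : Type*} [Fintype n] {B C : Matrix n n K} {u : n → K} {μ : K}

theorem hasEigenvector_toLin'_of_mulVec_eq [DecidableEq n] (hu : u ≠ 0) (hBu : B *ᵥ u = μ • u) :
    Module.End.HasEigenvector B.toLin' μ u :=
  ⟨Module.End.mem_eigenspace_iff.2 hBu, hu⟩

theorem exists_mulVec_eq_smul_of_commute [DecidableEq n] (hB : B.charpoly.Separable)
    (hBC : Commute B C) (hu : u ≠ 0) (hBu : B *ᵥ u = μ • u) : ∃ x : K, C *ᵥ u = x • u := by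
  rw [← charpoly_toLin'] at hB
  exact exists_apply_eq_smul_of_commute hB (hBC.map toLinAlgEquiv')
    (hasEigenvector_toLin'_of_mulVec_eq hu hBu)

theorem pow_mulVec_eq_pow_smul [DecidableEq n] (hu : u ≠ 0) (hBu : B *ᵥ u = μ • u) (k : ℕ) :
    B ^ k *ᵥ u = μ ^ k • u := by
  rw [← (hasEigenvector_toLin'_of_mulVec_eq hu hBu).pow_apply, ← toLin'_pow, toLin'_apply]

theorem isIntegral_of_map_intCast_mulVec_eq {M : Matrix n n ℤ} (hu : u ≠ 0)
    (hMu : M.map (Int.cast : ℤ → K) *ᵥ u = μ • u) : IsIntegral ℤ μ := by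
  classical
  have hroot := (Module.End.hasEigenvalue_iff_isRoot_charpoly _ _).1
    (Module.End.hasEigenvalue_of_hasEigenvector (hasEigenvector_toLin'_of_mulVec_eq hu hMu))
  rw [charpoly_toLin', charpoly_map_intCast, IsRoot, eval_map] at hroot
  exact ⟨M.charpoly, M.charpoly_monic, hroot⟩

end Eigenvector

section EndomorphismsOfGA

variable {n : ℕ} {A : Matrix (Fin n) (Fin n) ℤ} {T : Matrix (Fin n) (Fin n) ℚ}
  {L : Type*} [Field L] [Algebra ℚ L]

theorem exists_pow_mul_map_eq_map_intCast_mul_pow (hA : A.det ≠ 0)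
    (hT : ∀ x ∈ GA A, T *ᵥ x ∈ GA A) (m : ℕ) :
    ∃ (k : ℕ) (M : Matrix (Fin n) (Fin n) ℤ),
      (Aq A).map (algebraMap ℚ L) ^ k * T.map (algebraMap ℚ L) =
        M.map (Int.cast : ℤ → L) * (Aq A).map (algebraMap ℚ L) ^ m := by
  obtain ⟨k, M, hM⟩ := exists_pow_mul_eq_map_intCast_mul_pow hA hT m
  have hML : (M.map (Int.cast : ℤ → ℚ)).map (algebraMap ℚ L) = M.map (Int.cast : ℤ → L) :=
    map_intCast_map_algebraMap M
  refine ⟨k, M, ?_⟩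
  simpa only [map_mul, map_pow, RingHom.mapMatrix_apply, hML] using
    congrArg (algebraMap ℚ L).mapMatrix hM

variable {p : ℕ} [Fact p.Prime] {Γ₀ : Type*} [LinearOrderedCommGroupWithZero Γ₀]
  {v : Valuation L Γ₀}

theorem ncard_setOf_rootSet_charpoly_eq_tp (hv : v p < 1) (hsep : (Aq A).charpoly.Separable)
    (hsplit : ((Aq A).charpoly.map (algebraMap ℚ L)).Splits) :
    {α : (Aq A).charpoly.rootSet L | v α < 1}.ncard = tp A p := by
  classical
  have hmap : (Aq A).charpoly.map (algebraMap ℚ L) = A.charpoly.map (Int.castRingHom L) := by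
    rw [Aq, charpoly_map_intCast, Polynomial.map_map]
    exact congrArg A.charpoly.map (RingHom.ext_int _ _)
  rw [ncard_setOf_rootSet_eq_countP hsep (v · < 1), aroots, hmap, tp,
    rootMultiplicity_zero_map_zmod v hv A.charpoly_monic (hmap ▸ hsplit)]

theorem coprime_card_rootSet_charpoly_ncard (hv : v p < 1) (hsep : (Aq A).charpoly.Separable)
    (hsplit : ((Aq A).charpoly.map (algebraMap ℚ L)).Splits) (hcop : n.Coprime (tp A p)) :
    (Nat.card ((Aq A).charpoly.rootSet L)).Coprime
      {α : (Aq A).charpoly.rootSet L | v α < 1}.ncard := by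
  rwa [ncard_setOf_rootSet_charpoly_eq_tp hv hsep hsplit, Nat.card_eq_fintype_card,
    card_rootSet_eq_natDegree hsep hsplit, charpoly_natDegree_eq_dim, Fintype.card_fin]

theorem commute_map_of_forall_mem_GA [Normal ℚ L] [MulArchimedean Γ₀] (hv : v p < 1)
    (hA : A.det ≠ 0) (hirr : Irreducible (Aq A).charpoly)
    (hsplit : ((Aq A).charpoly.map (algebraMap ℚ L)).Splits) (hcop : n.Coprime (tp A p))
    (hT : ∀ x ∈ GA A, T *ᵥ x ∈ GA A) :
    Commute ((Aq A).map (algebraMap ℚ L)) (T.map (algebraMap ℚ L)) := by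
  classical
  have hsep := hirr.separable
  have hnodal := aeval_nodal_rootSet_charpoly hsep hsplit
  have := isPretransitive_rootSet (L := L) hirr
  have : Nonempty ((Aq A).charpoly.rootSet L) := by
    rw [← Fintype.card_pos_iff, card_rootSet_eq_natDegree hsep hsplit]
    exact hirr.natDegree_pos
  refine commute_of_forall_spectralProj_mul_mul_eq_zero Subtype.val_injective hnodal fun α β =>
    not_imp_comm.1 fun hblock => Eq.symm ?_
  refine eq_of_hittingSet_subset (G := Gal(L/ℚ))
    (coprime_card_rootSet_charpoly_ncard hv hsep hsplit hcop) fun σ hσβ => ?_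
  by_contra hσα
  have hzero := mul_mul_eq_zero_of_valuation_lt_one v
    (exists_pow_mul_map_eq_map_intCast_mul_pow hA hT) (spectralProj_mul hnodal (σ • α))
    (mul_spectralProj hnodal (σ • β)) (not_lt.1 hσα) hσβ
  have hTσ : σ.mapMatrix (T.map (algebraMap ℚ L)) = T.map (algebraMap ℚ L) := by
    ext i j
    exact σ.commutes (T i j)
  rw [← mapMatrix_spectralProj, ← mapMatrix_spectralProj, ← hTσ, ← map_mul, ← map_mul] at hzero
  exact hblock ((map_eq_zero_iff σ.mapMatrix σ.mapMatrix.injective).1 hzero)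

theorem commute_of_forall_mem_GA (hA : A.det ≠ 0) (hirr : Irreducible (Aq A).charpoly)
    (hcop : n.Coprime (tp A p)) (hT : ∀ x ∈ GA A, T *ᵥ x ∈ GA A) : Commute (Aq A) T := by
  -- Not found by instance search, which uses `DivisionRing.toRatAlgebra` here instead of
  -- `AlgebraicClosure.instAlgebra`; the two agree only by unfolding.
  have : Normal ℚ (AlgebraicClosure ℚ) :=
    { __ := AlgebraicClosure.isAlgebraic ℚ
      splits' := fun _ => IsAlgClosed.splits _ }
  obtain ⟨v, hv⟩ := exists_valuation_natCast_prime_lt_one (AlgebraicClosure ℚ) p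
  have hcomm := commute_map_of_forall_mem_GA hv hA hirr (IsAlgClosed.splits _) hcop hT
  exact hcomm.of_map (f := (algebraMap ℚ (AlgebraicClosure ℚ)).mapMatrix)
    (Matrix.map_injective (algebraMap ℚ _).injective)

end EndomorphismsOfGA

theorem stmt8_general {n : ℕ} {A : Matrix (Fin n) (Fin n) ℤ} (hA : A.det ≠ 0)
    (hirr : Irreducible (A.charpoly.map (Int.castRingHom ℚ)))
    (hcop : ∃ p : ℕ, p.Prime ∧ Nat.gcd n (tp A p) = 1)
    {K : Type*} [Field K] [CharZero K] {lam : K} {u : Fin n → K} (hu : u ≠ 0)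
    (hAu : (A.map (Int.cast : ℤ → K)) *ᵥ u = lam • u)
    {T : Matrix (Fin n) (Fin n) ℚ} (hT : ∀ v ∈ GA A, T *ᵥ v ∈ GA A) :
    ∃ x : K, (∃ k : ℕ, IsIntegral ℤ (lam ^ k * x)) ∧
      (T.map (Rat.cast : ℚ → K)) *ᵥ u = x • u := by
  obtain ⟨p, hp, hcop⟩ := hcop
  have : Fact p.Prime := ⟨hp⟩
  rw [← charpoly_map_intCast] at hirr
  replace hAu : (Aq A).map (algebraMap ℚ K) *ᵥ u = lam • u := by
    rwa [Aq, map_intCast_map_algebraMap]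
  have hsep : ((Aq A).map (algebraMap ℚ K)).charpoly.Separable := by
    rw [charpoly_map]
    exact hirr.separable.map
  have hcomm : Commute ((Aq A).map (algebraMap ℚ K)) (T.map (algebraMap ℚ K)) :=
    (commute_of_forall_mem_GA hA hirr hcop hT).map (algebraMap ℚ K).mapMatrix
  obtain ⟨x, hx⟩ := exists_mulVec_eq_smul_of_commute hsep hcomm hu hAu
  obtain ⟨k, M, hM⟩ := exists_pow_mul_map_eq_map_intCast_mul_pow (L := K) hA hT 0
  have hMu : M.map (Int.cast : ℤ → K) *ᵥ u = (lam ^ k * x) • u := by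
    rw [pow_zero, mul_one] at hM
    rw [← hM, ← mulVec_mulVec, hx, mulVec_smul, pow_mulVec_eq_pow_smul hu hAu, smul_smul,
      mul_comm]
  exact ⟨x, ⟨k, isIntegral_of_map_intCast_mulVec_eq hu hMu⟩, hx⟩

/-- any `T ∈ End(G_A)` acts on an eigenvector `u` of `A` (for the
eigenvalue `λ`) as multiplication by some `x ∈ K` with `λ^k x` integral for some `k`. -/
theorem stmt8 (n : ℕ) (A : Matrix (Fin n) (Fin n) ℤ) (hA : A.det ≠ 0)
    (hirr : Irreducible (A.charpoly.map (Int.castRingHom ℚ)))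
    (hP' : (Pbad A).Nonempty)
    (hcop : ∃ p : ℕ, p.Prime ∧ Nat.gcd n (tp A p) = 1)
    (K : Type) [Field K] [NumberField K] (lam : K)
    (hint : IsIntegral ℤ lam)
    (hroot : Polynomial.aeval lam (A.charpoly.map (Int.castRingHom ℚ)) = 0)
    (hgenK : Algebra.adjoin ℚ ({lam} : Set K) = ⊤)
    (u : Fin n → K) (hu : u ≠ 0)
    (hAu : (A.map (Int.cast : ℤ → K)) *ᵥ u = lam • u)
    (T : Matrix (Fin n) (Fin n) ℚ) (hT : ∀ v ∈ GA A, T *ᵥ v ∈ GA A) :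
    ∃ x : K, (∃ k : ℕ, IsIntegral ℤ (lam ^ k * x)) ∧
      (T.map (Rat.cast : ℚ → K)) *ᵥ u = x • u := stmt8_general hA hirr hcop hu hAu hT
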